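/- In the unconditioned n-bit majority MDP, for every x ∈ {0,1}^n let D = n + 1 − V*((0_b, x)); then D = d(x, s_reward) ∈ {0, …, n} is representable in b binary bits, and the most significant bit of its b-bit binary representation (i.e., Nat.testBit D (b−1)) equals 1 if and only if d(x, s_reward) > n/2, that is, if and only if a majority of the indices i ∈ {1, …, n} satisfy x_i ≠ (s_reward)_i. -/

import Mathlib

/-!
The control string moves along the orbit `0_b, f(0_b), f²(0_b), …`, which visits each nonzero string
exactly once in its first `n = 2^b − 1` steps and therefore meets the fixed point `1_b` for the first
time at step `n` (`le_of_iterate_eq_oneStr`). Every action either advances the control string or flips at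
most one representation bit, so reaching `(1_b, s_reward)` from `(0_b, x)` takes at least
`n + d(x, s_reward)` actions (`le_of_majTraj_eq`).

Conversely, the greedy policy `greedy`, which flips the bit addressed by the control string exactly
when it is wrong, is at `(1_b, s_reward)` from time `n + d(x, s_reward)` on (`greedyTraj_eq`), because
the orbit addresses every bit: `bitVal` is onto `{1, …, n}` from the nonzero strings. Counting the
remaining times below the horizon `2^b + n` gives `V* = n + 1 − d(x, s_reward)` (`majV_eq`). The claim
on the most significant bit is then the fact that a number below `2^b` has bit `b − 1` set iff it is
at least `2^(b-1)`.
-/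

/-- The all-false (all-zero) bit string of length `ℓ`. -/
def zeroStr (ℓ : ℕ) : Fin ℓ → Bool := fun _ => false

/-- The all-true (all-one) bit string of length `ℓ`. -/
def oneStr (ℓ : ℕ) : Fin ℓ → Bool := fun _ => true

/-- `f` is a control function over `{0,1}^b`: it fixes the all-one string, and the
iterates `f^(k)(0_b)` for `k = 1, …, 2^b − 1` cover exactly `{0,1}^b ∖ {0_b}`. -/
def IsControlFunc (b : ℕ) (f : (Fin b → Bool) → (Fin b → Bool)) : Prop :=
  f (oneStr b) = oneStr b ∧
    (fun k => f^[k] (zeroStr b)) '' Set.Icc 1 (2 ^ b - 1) = {v | v ≠ zeroStr b}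

/-- The value of a length-`b` bit string as a most-significant-bit-first binary number. -/
def bitVal {b : ℕ} (c : Fin b → Bool) : ℕ :=
  ∑ j : Fin b, if c j then 2 ^ (b - 1 - (j : ℕ)) else 0

/-- The Hamming distance between two bit strings. -/
def hammDist {n : ℕ} (x y : Fin n → Bool) : ℕ :=
  (Finset.univ.filter fun i => x i ≠ y i).card

/-- The transition of the unconditioned `n`-bit majority MDP (`n = 2^b − 1`):
on action `1` with nonzero control bits, flip the `val(c)`-th (1-indexed)
representation bit; otherwise apply the control function to the control bits. -/
def majStep (b : ℕ) (f : (Fin b → Bool) → (Fin b → Bool))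
    (s : (Fin b → Bool) × (Fin (2 ^ b - 1) → Bool)) (a : Bool) :
    (Fin b → Bool) × (Fin (2 ^ b - 1) → Bool) :=
  if a = true ∧ s.1 ≠ zeroStr b then
    (s.1, fun i => if (i : ℕ) + 1 = bitVal s.1 then !(s.2 i) else s.2 i)
  else (f s.1, s.2)

/-- The trajectory induced by an action sequence `a`: `majTraj b f s a 0 = s` (this is
`s_1`) and `majTraj b f s a t` is the state `s_{t+1}`. -/
def majTraj (b : ℕ) (f : (Fin b → Bool) → (Fin b → Bool))
    (s : (Fin b → Bool) × (Fin (2 ^ b - 1) → Bool)) (a : ℕ → Bool) :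
    ℕ → (Fin b → Bool) × (Fin (2 ^ b - 1) → Bool)
  | 0 => s
  | t + 1 => majStep b f (majTraj b f s a t) (a t)

/-- The optimal value of the unconditioned majority MDP with horizon `H = 2^b + n`:
the maximal, over action sequences, number of time steps `t ∈ {1, …, H}` with
`s_t = (1_b, s_reward)`. -/
noncomputable def majV (b : ℕ) (f : (Fin b → Bool) → (Fin b → Bool))
    (sr : Fin (2 ^ b - 1) → Bool)
    (s : (Fin b → Bool) × (Fin (2 ^ b - 1) → Bool)) : ℕ :=
  sSup {v | ∃ a : ℕ → Bool,
    v = ((Finset.range (2 ^ b + (2 ^ b - 1))).filter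
          fun t => majTraj b f s a t = (oneStr b, sr)).card}

theorem hammDist_eq {n : ℕ} (x y : Fin n → Bool) : hammDist x y = hammingDist x y := rfl

/-- Before step `2^b − 1` the orbit of `0_b` avoids `1_b`: otherwise it would get stuck there and
visit fewer than the `2^b − 1` nonzero strings. -/
theorem le_of_iterate_eq_oneStr {b : ℕ} (hb : 1 ≤ b) {f : (Fin b → Bool) → (Fin b → Bool)}
    (hf : IsControlFunc b f) {k : ℕ} (hk : f^[k] (zeroStr b) = oneStr b) : 2 ^ b - 1 ≤ k := by
  obtain ⟨h1, h2⟩ := hf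
  have h01 : oneStr b ≠ zeroStr b := fun h => by
    simpa [oneStr, zeroStr] using congrFun h ⟨0, hb⟩
  have hk1 : 1 ≤ k := by
    rcases Nat.eq_zero_or_pos k with rfl | h
    · exact absurd hk.symm h01
    · exact h
  have hstuck : ∀ m, f^[m + k] (zeroStr b) = oneStr b := fun m => by
    rw [Function.iterate_add_apply, hk, Function.iterate_fixed h1]
  have hsub : (Finset.univ.erase (zeroStr b)) ⊆
      (Finset.Icc 1 k).image (fun j => f^[j] (zeroStr b)) := by
    intro v hv
    have hv' : v ∈ {v | v ≠ zeroStr b} := by simpa using hv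
    rw [← h2] at hv'
    obtain ⟨j, hj, rfl⟩ := hv'
    rw [Finset.mem_image]
    rcases le_total j k with hjk | hjk
    · exact ⟨j, Finset.mem_Icc.2 ⟨hj.1, hjk⟩, rfl⟩
    · refine ⟨k, Finset.mem_Icc.2 ⟨hk1, le_rfl⟩, ?_⟩
      have := hstuck (j - k)
      rw [Nat.sub_add_cancel hjk] at this
      simp only [hk, this]
  have := (Finset.card_le_card hsub).trans Finset.card_image_le
  simpa [Finset.card_erase_of_mem] using this

theorem iterate_eq_oneStr {b : ℕ} {f : (Fin b → Bool) → (Fin b → Bool)} (hb : 1 ≤ b)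
    (hf : IsControlFunc b f) {k : ℕ} (hk : 2 ^ b - 1 ≤ k) : f^[k] (zeroStr b) = oneStr b := by
  have h01 : oneStr b ≠ zeroStr b := fun h => by
    simpa [oneStr, zeroStr] using congrFun h ⟨0, hb⟩
  have hmem : oneStr b ∈ {v | v ≠ zeroStr b} := h01
  rw [← hf.2] at hmem
  obtain ⟨j, hj, hj1⟩ := hmem
  have hjk : j ≤ k := hj.2.trans hk
  rw [← Nat.sub_add_cancel hjk, Function.iterate_add_apply]
  simp only at hj1
  rw [hj1, Function.iterate_fixed hf.1]

theorem sum_testBit (b m : ℕ) :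
    (∑ j : Fin b, if m.testBit j then 2 ^ (j : ℕ) else 0) = m % 2 ^ b := by
  induction b with
  | zero => simp [Nat.mod_one]
  | succ b ih =>
    rw [Fin.sum_univ_castSucc, Nat.mod_pow_succ]
    simp only [Fin.val_castSucc, Fin.val_last, ih]
    rw [Nat.testBit_eq_decide_div_mod_eq]
    rcases Nat.mod_two_eq_zero_or_one (m / 2 ^ b) with h | h <;> simp [h]

theorem exists_bitVal_eq {b m : ℕ} (hm : m < 2 ^ b) : ∃ c : Fin b → Bool, bitVal c = m := by
  refine ⟨fun j => m.testBit (b - 1 - j), ?_⟩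
  have h := sum_testBit b m
  rw [Nat.mod_eq_of_lt hm, ← Equiv.sum_comp Fin.revPerm] at h
  refine Eq.trans ?_ h
  rw [bitVal]
  refine Finset.sum_congr rfl fun j _ => ?_
  have : b - 1 - (j : ℕ) = b - (j + 1) := by omega
  simp [this, Fin.val_rev]

theorem exists_iterate_bitVal {b : ℕ} {f : (Fin b → Bool) → (Fin b → Bool)}
    (hf : IsControlFunc b f) (i : Fin (2 ^ b - 1)) :
    ∃ j, 1 ≤ j ∧ j ≤ 2 ^ b - 1 ∧ bitVal (f^[j] (zeroStr b)) = i + 1 := by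
  obtain ⟨c, hc⟩ := exists_bitVal_eq (b := b) (m := i + 1) (by have := i.2; omega)
  have hmem : c ∈ {v | v ≠ zeroStr b} := by
    rintro rfl
    simp [bitVal, zeroStr] at hc
  rw [← hf.2] at hmem
  obtain ⟨j, hj, rfl⟩ := hmem
  exact ⟨j, hj.1, hj.2, hc⟩

/-- The representation bits `x` with the bit of (1-based) index `v` negated. -/
def flipAt {n : ℕ} (x : Fin n → Bool) (v : ℕ) : Fin n → Bool :=
  fun i => if (i : ℕ) + 1 = v then !(x i) else x i

theorem hammDist_flipAt_le {n : ℕ} (x : Fin n → Bool) (v : ℕ) : hammDist x (flipAt x v) ≤ 1 := by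
  unfold hammDist
  rw [Finset.card_le_one]
  intro i hi j hj
  simp only [flipAt] at hi hj
  have hi' : (i : ℕ) + 1 = v := by by_contra h; simp [h] at hi
  have hj' : (j : ℕ) + 1 = v := by by_contra h; simp [h] at hj
  exact Fin.ext (by omega)

/-- Flipping a wrong bit brings `x` one step closer to `y`. -/
theorem hammDist_flipAt {n : ℕ} {x y : Fin n → Bool} {i : Fin n} (h : x i ≠ y i) :
    hammDist (flipAt x (i + 1)) y + 1 = hammDist x y := by
  unfold hammDist
  have : (Finset.univ.filter fun j => flipAt x (i + 1) j ≠ y j) =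
      (Finset.univ.filter fun j => x j ≠ y j).erase i := by
    ext j
    by_cases hj : j = i
    · subst hj
      revert h
      cases h1 : x j <;> cases h2 : y j <;> simp [flipAt, h1, h2]
    · have : (j : ℕ) ≠ i := fun h => hj (Fin.ext h)
      simp [flipAt, hj, this]
  rw [this, Finset.card_erase_add_one]
  simpa using h

/-- Of the first `t` actions, `k` advanced the control string; the other `t − k` flipped at most one
representation bit each. -/
theorem majTraj_spec (b : ℕ) (f : (Fin b → Bool) → (Fin b → Bool)) (x : Fin (2 ^ b - 1) → Bool)
    (a : ℕ → Bool) (t : ℕ) :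
    ∃ k, (majTraj b f (zeroStr b, x) a t).1 = f^[k] (zeroStr b) ∧
      k + hammDist x (majTraj b f (zeroStr b, x) a t).2 ≤ t := by
  induction t with
  | zero => exact ⟨0, rfl, by simp [majTraj, hammDist]⟩
  | succ t ih =>
    obtain ⟨k, hk, hle⟩ := ih
    rw [majTraj]
    generalize majTraj b f (zeroStr b, x) a t = s at hk hle
    unfold majStep
    split_ifs with h
    · refine ⟨k, hk, ?_⟩
      have h1 := hammDist_flipAt_le s.2 (bitVal s.1)
      have h2 : hammDist x (flipAt s.2 (bitVal s.1)) ≤ _ := hammingDist_triangle x s.2 _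
      rw [← hammDist_eq, ← hammDist_eq] at h2
      change k + hammDist x (flipAt s.2 (bitVal s.1)) ≤ t + 1
      omega
    · exact ⟨k + 1, by rw [Function.iterate_succ_apply', ← hk], by simp only; omega⟩

theorem le_of_majTraj_eq {b : ℕ} (hb : 1 ≤ b) {f : (Fin b → Bool) → (Fin b → Bool)}
    (hf : IsControlFunc b f) {sr x : Fin (2 ^ b - 1) → Bool} {a : ℕ → Bool} {t : ℕ}
    (h : majTraj b f (zeroStr b, x) a t = (oneStr b, sr)) :
    2 ^ b - 1 + hammDist x sr ≤ t := by
  obtain ⟨k, hk, hle⟩ := majTraj_spec b f x a t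
  rw [h] at hk hle
  have := le_of_iterate_eq_oneStr hb hf hk.symm
  simp only at hle
  omega

/-- The greedy policy: flip exactly when the control string addresses a bit that differs from the
rewarded string. -/
def greedy {b : ℕ} (sr : Fin (2 ^ b - 1) → Bool)
    (s : (Fin b → Bool) × (Fin (2 ^ b - 1) → Bool)) : Bool :=
  decide (∃ i : Fin (2 ^ b - 1), (i : ℕ) + 1 = bitVal s.1 ∧ s.2 i ≠ sr i)

/-- One step of the Markov chain obtained by following the greedy policy. -/
def greedyStep (b : ℕ) (f : (Fin b → Bool) → (Fin b → Bool)) (sr : Fin (2 ^ b - 1) → Bool)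
    (s : (Fin b → Bool) × (Fin (2 ^ b - 1) → Bool)) :
    (Fin b → Bool) × (Fin (2 ^ b - 1) → Bool) :=
  majStep b f s (greedy sr s)

theorem majTraj_greedy (b : ℕ) (f : (Fin b → Bool) → (Fin b → Bool))
    (sr : Fin (2 ^ b - 1) → Bool) (s : (Fin b → Bool) × (Fin (2 ^ b - 1) → Bool)) (t : ℕ) :
    majTraj b f s (fun t => greedy sr ((greedyStep b f sr)^[t] s)) t =
      (greedyStep b f sr)^[t] s := by
  induction t with
  | zero => rfl
  | succ t ih => rw [majTraj, ih, Function.iterate_succ_apply', greedyStep]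

/-- Invariant of the greedy trajectory: if `k` of the first `t` actions advanced the control string,
each of the other `t − k` corrected a wrong bit, and every bit addressed by an earlier control string
of the orbit is now correct. -/
theorem greedy_spec (b : ℕ) (f : (Fin b → Bool) → (Fin b → Bool))
    (sr x : Fin (2 ^ b - 1) → Bool) (t : ℕ) :
    ∃ k, ((greedyStep b f sr)^[t] (zeroStr b, x)).1 = f^[k] (zeroStr b) ∧
      t + hammDist ((greedyStep b f sr)^[t] (zeroStr b, x)).2 sr = k + hammDist x sr ∧
      ∀ j < k, ∀ i : Fin (2 ^ b - 1), (i : ℕ) + 1 = bitVal (f^[j] (zeroStr b)) →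
        ((greedyStep b f sr)^[t] (zeroStr b, x)).2 i = sr i := by
  induction t with
  | zero => exact ⟨0, rfl, by simp, by simp⟩
  | succ t ih =>
    obtain ⟨k, hk, hd, hok⟩ := ih
    rw [Function.iterate_succ_apply']
    generalize (greedyStep b f sr)^[t] (zeroStr b, x) = s at hk hd hok
    by_cases hg : ∃ i : Fin (2 ^ b - 1), (i : ℕ) + 1 = bitVal s.1 ∧ s.2 i ≠ sr i
    · have hg' : greedy sr s = true := by simpa only [greedy, decide_eq_true_eq] using hg
      obtain ⟨i, hi, hne⟩ := hg
      have hs : s.1 ≠ zeroStr b := by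
        intro h
        rw [h] at hi
        simp [bitVal, zeroStr] at hi
      have hstep : greedyStep b f sr s = (s.1, flipAt s.2 (i + 1)) := by
        rw [greedyStep, majStep, if_pos ⟨hg', hs⟩, hi]
        rfl
      rw [hstep]
      refine ⟨k, hk, ?_, ?_⟩
      · have := hammDist_flipAt hne
        simp only
        omega
      · intro j hj i' hi'
        have h1 := hok j hj i' hi'
        have : (i' : ℕ) ≠ i := fun h => by
          rw [Fin.ext h] at h1
          exact hne h1
        simpa [flipAt, this] using h1
    · have hg' : greedy sr s = false := by simpa only [greedy, decide_eq_false_iff_not] using hg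
      have hstep : greedyStep b f sr s = (f s.1, s.2) := by
        rw [greedyStep, majStep, hg', if_neg (by simp)]
      rw [hstep]
      refine ⟨k + 1, by rw [Function.iterate_succ_apply', ← hk], by simp only; omega, ?_⟩
      intro j hj i hi
      rcases Nat.lt_succ_iff_lt_or_eq.1 hj with h | rfl
      · exact hok j h i hi
      · by_contra hne
        exact hg ⟨i, by rw [hk, hi], hne⟩

theorem greedyTraj_eq {b : ℕ} (hb : 1 ≤ b) {f : (Fin b → Bool) → (Fin b → Bool)}
    (hf : IsControlFunc b f) (sr x : Fin (2 ^ b - 1) → Bool) {t : ℕ}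
    (ht : 2 ^ b - 1 + hammDist x sr ≤ t) :
    (greedyStep b f sr)^[t] (zeroStr b, x) = (oneStr b, sr) := by
  obtain ⟨k, hk, hd, hok⟩ := greedy_spec b f sr x t
  generalize (greedyStep b f sr)^[t] (zeroStr b, x) = s at hk hd hok
  have hnk : 2 ^ b - 1 ≤ k := by omega
  have h2 : s.2 = sr := by
    rcases hnk.eq_or_lt with h | h
    -- If `k = n`, the bit addressed by `1_b` is not covered by the invariant, but the count of
    -- corrections leaves no wrong bit.
    · have h0 : hammDist s.2 sr = 0 := by omega
      rw [hammDist_eq] at h0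
      exact hammingDist_eq_zero.1 h0
    · funext i
      obtain ⟨j, _, hj, hji⟩ := exists_iterate_bitVal hf i
      exact hok j (by omega) i hji.symm
  exact Prod.ext (by rw [hk, iterate_eq_oneStr hb hf hnk]) h2

theorem majV_eq {b : ℕ} (hb : 1 ≤ b) {f : (Fin b → Bool) → (Fin b → Bool)}
    (hf : IsControlFunc b f) (sr x : Fin (2 ^ b - 1) → Bool) :
    majV b f sr (zeroStr b, x) = 2 ^ b - hammDist x sr := by
  have hcard : (Finset.Ico (2 ^ b - 1 + hammDist x sr) (2 ^ b + (2 ^ b - 1))).card =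
      2 ^ b - hammDist x sr := by
    rw [Nat.card_Ico]
    omega
  refine IsGreatest.csSup_eq ⟨⟨fun t => greedy sr ((greedyStep b f sr)^[t] (zeroStr b, x)), ?_⟩, ?_⟩
  · rw [← hcard]
    congr 1
    ext t
    simp only [Finset.mem_Ico, Finset.mem_filter, Finset.mem_range]
    constructor
    · rintro ⟨h1, h2⟩
      exact ⟨h2, by rw [majTraj_greedy, greedyTraj_eq hb hf sr x h1]⟩
    · rintro ⟨h1, h2⟩
      exact ⟨le_of_majTraj_eq hb hf h2, h1⟩
  · rintro v ⟨a, rfl⟩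
    rw [← hcard]
    refine Finset.card_le_card fun t ht => ?_
    simp only [Finset.mem_filter, Finset.mem_range] at ht
    exact Finset.mem_Ico.2 ⟨le_of_majTraj_eq hb hf ht.2, ht.1⟩

/-- With `n = 2^b − 1` and `D = n + 1 − V*((0_b, x))`, we have
`D = d(x, s_reward) ∈ {0, …, n}` (so `D` fits in `b` binary bits), and the most
significant bit of the `b`-bit representation of `D` is `1` iff `d(x, s_reward) > n/2`,
i.e. iff a majority of the indices `i` satisfy `x_i ≠ (s_reward)_i`. -/
theorem majMDP_value_msb_is_majority (b : ℕ) (hb : 1 ≤ b)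
    (f : (Fin b → Bool) → (Fin b → Bool)) (hf : IsControlFunc b f)
    (sr : Fin (2 ^ b - 1) → Bool) (x : Fin (2 ^ b - 1) → Bool) :
    (2 ^ b - 1) + 1 - majV b f sr (zeroStr b, x) = hammDist x sr ∧
    (2 ^ b - 1) + 1 - majV b f sr (zeroStr b, x) ≤ 2 ^ b - 1 ∧
    (Nat.testBit ((2 ^ b - 1) + 1 - majV b f sr (zeroStr b, x)) (b - 1) = true ↔
      (2 ^ b - 1) / 2 < hammDist x sr) := by
  have hd : hammDist x sr ≤ 2 ^ b - 1 := by
    have : hammDist x sr ≤ _ := hammingDist_le_card_fintype (x := x) (y := sr)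
    simpa using this
  have hpos : 0 < 2 ^ b := by positivity
  have hD : (2 ^ b - 1) + 1 - majV b f sr (zeroStr b, x) = hammDist x sr := by
    rw [majV_eq hb hf]
    omega
  rw [hD]
  refine ⟨rfl, hd, ?_⟩
  obtain ⟨m, rfl⟩ : ∃ m, b = m + 1 := ⟨b - 1, by omega⟩
  have hp : 2 ^ (m + 1) = 2 * 2 ^ m := by ring
  have hhalf : (2 ^ (m + 1) - 1) / 2 < hammDist x sr ↔ 2 ^ m ≤ hammDist x sr := by omega
  rw [hhalf, Nat.add_sub_cancel]
  constructor
  · exact Nat.ge_two_pow_of_testBit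
  · intro h
    rw [Nat.testBit_eq_decide_div_mod_eq, decide_eq_true_eq]
    have : hammDist x sr / 2 ^ m = 1 := by
      rw [Nat.div_eq_iff (by positivity)]
      omega
    rw [this]
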